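/- arXiv:1402.0799 — 2 statements merged into one kernel-verified Lean document; each statement's English description precedes it below -/
import Mathlib

section
/- Let G be a group, S a generating n-tuple of G with n ≤ 3, and H a subgroup of finite index in G with n ≤ [G:H]. Then there is a generating n-tuple S' of G, Nielsen equivalent to S, and a left-right transversal T for H in G such that every entry of S' belongs to T. -/
/-- A single Nielsen move on an `n`-tuple of elements of `G`. -/
def IsNielsenMove {G : Type*} [Group G] {n : ℕ} (S S' : Fin n → G) : Prop :=
  (∃ i j, i ≠ j ∧
    (S' = Function.update S i (S j * S i) ∨ S' = Function.update S i ((S j)⁻¹ * S i) ∨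
     S' = Function.update S i (S i * S j) ∨ S' = Function.update S i (S i * (S j)⁻¹))) ∨
  (∃ i, S' = Function.update S i (S i)⁻¹) ∨
  (∃ i j, i ≠ j ∧ S' = S ∘ Equiv.swap i j)

/-- Two `n`-tuples are Nielsen equivalent if they differ by a finite sequence of Nielsen
moves. -/
def NielsenEquiv {G : Type*} [Group G] {n : ℕ} (S S' : Fin n → G) : Prop :=
  Relation.ReflTransGen IsNielsenMove S S'

/-- A left transversal for `H` in `G`: a set containing exactly one element of each left
coset of `H`. -/
def IsLeftTransversal {G : Type*} [Group G] (H : Subgroup G) (T : Set G) : Prop :=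
  ∀ g : G, ∃! t, t ∈ T ∧ g⁻¹ * t ∈ H

/-- A right transversal for `H` in `G`: a set containing exactly one element of each right
coset of `H`. -/
def IsRightTransversal {G : Type*} [Group G] (H : Subgroup G) (T : Set G) : Prop :=
  ∀ g : G, ∃! t, t ∈ T ∧ t * g⁻¹ ∈ H

theorem aux_closure_move {G : Type*} [Group G] {n : ℕ} {S S' : Fin n → G}
    (h : IsNielsenMove S S') :
    Subgroup.closure (Set.range S) ≤ Subgroup.closure (Set.range S') := by
  rw [Subgroup.closure_le]
  rintro _ ⟨k, rfl⟩
  have mem : ∀ i, S' i ∈ Subgroup.closure (Set.range S') :=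
    fun i => Subgroup.subset_closure ⟨i, rfl⟩
  show S k ∈ Subgroup.closure (Set.range S')
  rcases h with ⟨i, j, hij, h⟩ | ⟨i, h⟩ | ⟨i, j, hij, h⟩
  · have hi := mem i
    have hj := mem j
    have hk := mem k
    have e : S' j = S j := by
      rcases h with h | h | h | h <;> rw [h] <;> simp [Function.update_of_ne hij.symm]
    by_cases hki : k = i
    · subst hki
      rw [e] at hj
      rcases h with h | h | h | h
      · have e2 : S' k = S j * S k := by rw [h]; simp
        rw [e2] at hi
        exact (Subgroup.mul_mem_cancel_left _ hj).1 hi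
      · have e2 : S' k = (S j)⁻¹ * S k := by rw [h]; simp
        rw [e2] at hi
        exact (Subgroup.mul_mem_cancel_left _ (inv_mem hj)).1 hi
      · have e2 : S' k = S k * S j := by rw [h]; simp
        rw [e2] at hi
        exact (Subgroup.mul_mem_cancel_right _ hj).1 hi
      · have e2 : S' k = S k * (S j)⁻¹ := by rw [h]; simp
        rw [e2] at hi
        exact (Subgroup.mul_mem_cancel_right _ (inv_mem hj)).1 hi
    · have e2 : S' k = S k := by
        rcases h with h | h | h | h <;> rw [h] <;> simp [Function.update_of_ne hki]
      rwa [e2] at hk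
  · have hk := mem k
    by_cases hki : k = i
    · subst hki
      have e2 : S' k = (S k)⁻¹ := by rw [h]; simp
      rw [e2] at hk
      exact (Subgroup.inv_mem_iff _).1 hk
    · have e2 : S' k = S k := by rw [h]; simp [Function.update_of_ne hki]
      rwa [e2] at hk
  · have := mem (Equiv.swap i j k)
    rw [h] at this
    simp only [Function.comp_apply, Equiv.swap_apply_self] at this
    rw [h]
    exact this

theorem aux_closure {G : Type*} [Group G] {n : ℕ} {S S' : Fin n → G}
    (h : NielsenEquiv S S') (hS : Subgroup.closure (Set.range S) = ⊤) :
    Subgroup.closure (Set.range S') = ⊤ := by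
  induction h with
  | refl => exact hS
  | tail _ hm ih => exact top_le_iff.1 (ih ▸ aux_closure_move hm)

/-- `x` is a left coset and `y` the inverse of a right coset which meet. -/
def AuxAdj {G : Type*} [Group G] (H : Subgroup G) (x y : G ⧸ H) : Prop :=
  ∃ g : G, (g : G ⧸ H) = x ∧ ((g⁻¹ : G) : G ⧸ H) = y

theorem AuxAdj.rect {G : Type*} [Group G] {H : Subgroup G} {x y x' y' : G ⧸ H}
    (h : AuxAdj H x y) (h1 : AuxAdj H x' y) (h2 : AuxAdj H x y') : AuxAdj H x' y' := by
  obtain ⟨g, rfl, rfl⟩ := h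
  obtain ⟨g1, rfl, h1⟩ := h1
  obtain ⟨g2, h2, rfl⟩ := h2
  rw [QuotientGroup.eq] at h1 h2
  refine ⟨g1 * g⁻¹ * g2, ?_, ?_⟩
  · rw [QuotientGroup.eq]
    have : (g1 * g⁻¹ * g2)⁻¹ * g1 = g2⁻¹ * g := by group
    rw [this]; exact h2
  · rw [QuotientGroup.eq]
    have : (g1 * g⁻¹ * g2)⁻¹⁻¹ * g2⁻¹ = g1⁻¹⁻¹ * g⁻¹ := by group
    rw [this]; exact h1

theorem aux_matching {G : Type*} [Group G] (H : Subgroup G) (hfin : H.index ≠ 0) :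
    ∃ f : (G ⧸ H) ≃ (G ⧸ H), ∀ x, AuxAdj H x (f x) := by
  classical
  have : H.FiniteIndex := ⟨hfin⟩
  have : Finite (G ⧸ H) := inferInstance
  have : Finite (G ⧸ H.normalCore) := inferInstance
  let : Fintype (G ⧸ H) := Fintype.ofFinite _
  let : Fintype (G ⧸ H.normalCore) := Fintype.ofFinite _
  let π : G ⧸ H.normalCore → G ⧸ H := Subgroup.quotientMapOfLE H.normalCore_le
  have hπ : ∀ g : G, π (g : G ⧸ H.normalCore) = (g : G ⧸ H) := fun g => rfl
  let F : G ⧸ H → Finset (G ⧸ H.normalCore) := fun x => Finset.univ.filter (fun q => π q = x)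
  have hF : ∀ x, (F x).card = (F ((1 : G) : G ⧸ H)).card := by
    intro x
    induction x using QuotientGroup.induction_on with
    | H g =>
    symm
    refine Finset.card_bij (fun q _ => (g : G ⧸ H.normalCore) * q) ?_ ?_ ?_
    · intro q hq
      induction q using QuotientGroup.induction_on with
      | H k =>
      simp only [F, Finset.mem_filter, Finset.mem_univ, true_and] at hq ⊢
      rw [← QuotientGroup.mk_mul, hπ]
      rw [hπ] at hq
      rw [QuotientGroup.eq] at hq ⊢
      simpa [mul_assoc] using hq
    · intro a _ b _ h
      exact mul_left_cancel h
    · intro q hq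
      refine ⟨(g : G ⧸ H.normalCore)⁻¹ * q, ?_, by simp⟩
      induction q using QuotientGroup.induction_on with
      | H k =>
      simp only [F, Finset.mem_filter, Finset.mem_univ, true_and] at hq ⊢
      rw [← QuotientGroup.mk_inv, ← QuotientGroup.mk_mul, hπ]
      rw [hπ] at hq
      rw [QuotientGroup.eq] at hq ⊢
      simpa [mul_assoc] using hq
  have hpos : 0 < (F ((1 : G) : G ⧸ H)).card := by
    refine Finset.card_pos.2 ⟨((1 : G) : G ⧸ H.normalCore), ?_⟩
    simp only [F, Finset.mem_filter, Finset.mem_univ, true_and]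
    exact hπ 1
  have hcount : ∀ A : Finset (G ⧸ H), (Finset.univ.filter (fun q => π q ∈ A)).card
      = A.card * (F ((1 : G) : G ⧸ H)).card := by
    intro A
    rw [Finset.card_eq_sum_card_fiberwise (f := π) (t := A)]
    · rw [Finset.sum_congr rfl (g := fun _ => (F ((1 : G) : G ⧸ H)).card)]
      · simp
      · intro x hx
        rw [← hF x]
        congr 1
        ext q
        simp only [F, Finset.mem_filter, Finset.mem_univ, true_and]
        constructor
        · exact fun h => h.2
        · exact fun h => ⟨h ▸ hx, h⟩
    · intro q hq
      simpa using hq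
  have hall := (Finset.all_card_le_biUnion_card_iff_exists_injective
    (fun x : G ⧸ H => Finset.univ.filter (fun y => AuxAdj H x y))).1 (by
      intro A
      refine Nat.le_of_mul_le_mul_right ?_ hpos
      rw [← hcount, ← hcount]
      refine Finset.card_le_card_of_injOn (fun q => q⁻¹) ?_ (fun a _ b _ h => inv_injective h)
      intro q hq
      induction q using QuotientGroup.induction_on with
      | H k =>
      simp only [Finset.coe_filter, Finset.mem_univ, true_and, Set.mem_ofPred_eq,
        Finset.mem_biUnion, Finset.mem_filter] at hq ⊢
      exact ⟨_, hq, k, rfl, rfl⟩)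
  obtain ⟨f, hf, hf2⟩ := hall
  refine ⟨Equiv.ofBijective f (Finite.injective_iff_bijective.1 hf), fun x => ?_⟩
  simpa using hf2 x

theorem aux_transversal {G : Type*} [Group G] (H : Subgroup G) (hfin : H.index ≠ 0) {n : ℕ}
    (S : Fin n → G) (hS : ∀ i j, i ≠ j → (S i)⁻¹ * S j ∉ H ∧ S i * (S j)⁻¹ ∉ H) :
    ∃ T : Set G, IsLeftTransversal H T ∧ IsRightTransversal H T ∧ ∀ i, S i ∈ T := by
  classical
  have key : ∀ s : Finset (Fin n), ∃ f : (G ⧸ H) ≃ (G ⧸ H), (∀ x, AuxAdj H x (f x)) ∧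
      ∀ i ∈ s, f (S i : G ⧸ H) = (((S i)⁻¹ : G) : G ⧸ H) := by
    intro s
    induction s using Finset.induction_on with
    | empty =>
      obtain ⟨f, hf⟩ := aux_matching H hfin
      exact ⟨f, hf, by simp⟩
    | insert i s his ih =>
      obtain ⟨f, hf, hs⟩ := ih
      have base : AuxAdj H (S i : G ⧸ H) (((S i)⁻¹ : G) : G ⧸ H) := ⟨S i, rfl, rfl⟩
      refine ⟨f.trans (Equiv.swap (f (S i : G ⧸ H)) (((S i)⁻¹ : G) : G ⧸ H)), ?_, ?_⟩
      · intro x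
        rw [Equiv.trans_apply]
        by_cases h1 : f x = f (S i : G ⧸ H)
        · rw [h1, Equiv.swap_apply_left]
          rw [f.injective h1]; exact base
        · by_cases h2 : f x = (((S i)⁻¹ : G) : G ⧸ H)
          · rw [h2, Equiv.swap_apply_right]
            exact base.rect (h2 ▸ hf x) (hf _)
          · rw [Equiv.swap_apply_of_ne_of_ne h1 h2]
            exact hf x
      · intro j hj
        rw [Equiv.trans_apply]
        by_cases hji : j = i
        · subst hji
          rw [Equiv.swap_apply_left]
        · have hjs : j ∈ s := (Finset.mem_insert.1 hj).resolve_left hji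
          rw [Equiv.swap_apply_of_ne_of_ne, hs j hjs]
          · intro h
            have := f.injective h
            rw [QuotientGroup.eq] at this
            exact (hS j i hji).1 this
          · rw [hs j hjs]
            intro h
            rw [QuotientGroup.eq, inv_inv] at h
            exact (hS j i hji).2 h
  obtain ⟨f, hf, hs⟩ := key Finset.univ
  have hex : ∀ x : G ⧸ H, ∃ g : G, (g : G ⧸ H) = x ∧ ((g⁻¹ : G) : G ⧸ H) = f x ∧
      ∀ i, (S i : G ⧸ H) = x → g = S i := by
    intro x
    by_cases h : ∃ i, (S i : G ⧸ H) = x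
    · obtain ⟨i, rfl⟩ := h
      refine ⟨S i, rfl, (hs i (Finset.mem_univ _)).symm, ?_⟩
      intro j hj
      by_contra hne
      have hji : j ≠ i := fun h => hne (by rw [h])
      exact (hS j i hji).1 (QuotientGroup.eq.1 hj)
    · obtain ⟨g, h1, h2⟩ := hf x
      exact ⟨g, h1, h2, fun i hi => (h ⟨i, hi⟩).elim⟩
  choose t ht1 ht2 ht3 using hex
  refine ⟨Set.range t, ?_, ?_, ?_⟩
  · intro g
    refine ⟨t (g : G ⧸ H), ⟨⟨_, rfl⟩, ?_⟩, ?_⟩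
    · rw [← QuotientGroup.eq, ht1]
    · rintro _ ⟨⟨x, rfl⟩, hx⟩
      rw [← QuotientGroup.eq, ht1] at hx
      rw [hx]
  · intro g
    have conv : ∀ u : G, u * g⁻¹ ∈ H ↔ ((u⁻¹ : G) : G ⧸ H) = ((g⁻¹ : G) : G ⧸ H) := by
      intro u
      rw [QuotientGroup.eq, inv_inv]
    refine ⟨t (f.symm ((g⁻¹ : G) : G ⧸ H)), ⟨⟨_, rfl⟩, ?_⟩, ?_⟩
    · rw [conv, ht2, Equiv.apply_symm_apply]
    · rintro _ ⟨⟨x, rfl⟩, hx⟩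
      rw [conv, ht2] at hx
      rw [← hx, Equiv.symm_apply_apply]
  · intro i
    exact ⟨(S i : G ⧸ H), ht3 _ i rfl⟩

/-- Two entries lie in different left and in different right cosets. -/
def AuxSep {G : Type*} [Group G] (H : Subgroup G) (a b : G) : Prop :=
  a⁻¹ * b ∉ H ∧ a * b⁻¹ ∉ H

theorem AuxSep.symm {G : Type*} [Group G] {H : Subgroup G} {a b : G} (h : AuxSep H a b) :
    AuxSep H b a := by
  refine ⟨fun h1 => h.1 ?_, fun h1 => h.2 ?_⟩
  · simpa using inv_mem h1
  · simpa using inv_mem h1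

theorem AuxSep.of_mem {G : Type*} [Group G] {H : Subgroup G} {a b : G} (ha : a ∈ H)
    (hb : b ∉ H) : AuxSep H a b := by
  refine ⟨fun h1 => hb ?_, fun h1 => hb ?_⟩
  · exact (Subgroup.mul_mem_cancel_left _ (inv_mem ha)).1 h1
  · exact (Subgroup.inv_mem_iff _).1 ((Subgroup.mul_mem_cancel_left _ ha).1 h1)

/-- The triple can be made good. -/
def AuxR {G : Type*} [Group G] (H : Subgroup G) (a b c : G) : Prop :=
  Subgroup.closure (Set.range ![a, b, c]) = ⊤ →
  ∃ a' b' c', NielsenEquiv ![a, b, c] ![a', b', c'] ∧ AuxSep H a' b' ∧ AuxSep H a' c' ∧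
    AuxSep H b' c'

section
variable {G : Type*} [Group G] {H : Subgroup G} {a b c : G}

theorem AuxR.step {a' b' c' : G} (hm : IsNielsenMove ![a, b, c] ![a', b', c'])
    (h : AuxR H a' b' c') : AuxR H a b c := by
  intro hS
  obtain ⟨x, y, z, h1, h2⟩ := h (aux_closure (Relation.ReflTransGen.single hm) hS)
  exact ⟨x, y, z, Relation.ReflTransGen.head hm h1, h2⟩

theorem AuxR.refl (h1 : AuxSep H a b) (h2 : AuxSep H a c) (h3 : AuxSep H b c) : AuxR H a b c :=
  fun _ => ⟨a, b, c, Relation.ReflTransGen.refl, h1, h2, h3⟩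

theorem AuxR.swap12 (h : AuxR H b a c) : AuxR H a b c := by
  refine h.step (Or.inr (Or.inr ⟨0, 1, by decide, ?_⟩))
  funext i; fin_cases i <;> rfl

theorem AuxR.swap23 (h : AuxR H a c b) : AuxR H a b c := by
  refine h.step (Or.inr (Or.inr ⟨1, 2, by decide, ?_⟩))
  funext i; fin_cases i <;> rfl

theorem AuxR.inv2 (h : AuxR H a b⁻¹ c) : AuxR H a b c := by
  refine h.step (Or.inr (Or.inl ⟨1, ?_⟩))
  funext i; fin_cases i <;> rfl

theorem AuxR.mulL (h : AuxR H a (c * b) c) : AuxR H a b c := by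
  refine h.step (Or.inl ⟨1, 2, by decide, Or.inl ?_⟩)
  funext i; fin_cases i <;> rfl

theorem AuxR.invL (h : AuxR H a (c⁻¹ * b) c) : AuxR H a b c := by
  refine h.step (Or.inl ⟨1, 2, by decide, Or.inr (Or.inl ?_)⟩)
  funext i; fin_cases i <;> rfl

theorem AuxR.mulR (h : AuxR H a (b * c) c) : AuxR H a b c := by
  refine h.step (Or.inl ⟨1, 2, by decide, Or.inr (Or.inr (Or.inl ?_))⟩)
  funext i; fin_cases i <;> rfl

theorem AuxR.invR (h : AuxR H a (b * c⁻¹) c) : AuxR H a b c := by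
  refine h.step (Or.inl ⟨1, 2, by decide, Or.inr (Or.inr (Or.inr ?_))⟩)
  funext i; fin_cases i <;> rfl

open scoped Pointwise in
theorem aux_index (hfin : H.index ≠ 0)
    (hS : Subgroup.closure (Set.range ![a, b, c]) = ⊤) (h3 : 3 ≤ H.index)
    (x : G ⧸ H)
    (ha : ∀ y, (y = ((1 : G) : G ⧸ H) ∨ y = x) → (a • y = ((1 : G) : G ⧸ H) ∨ a • y = x))
    (hb : ∀ y, (y = ((1 : G) : G ⧸ H) ∨ y = x) → (b • y = ((1 : G) : G ⧸ H) ∨ b • y = x))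
    (hc : ∀ y, (y = ((1 : G) : G ⧸ H) ∨ y = x) → (c • y = ((1 : G) : G ⧸ H) ∨ c • y = x)) :
    False := by
  have : H.FiniteIndex := ⟨hfin⟩
  have : Finite (G ⧸ H) := inferInstance
  have key : ∀ g : G, g • ({((1 : G) : G ⧸ H), x} : Set (G ⧸ H)) = {((1 : G) : G ⧸ H), x} := by
    intro g
    have hg : g ∈ Subgroup.closure (Set.range ![a, b, c]) := by rw [hS]; trivial
    have : Subgroup.closure (Set.range ![a, b, c]) ≤
        MulAction.stabilizer G ({((1 : G) : G ⧸ H), x} : Set (G ⧸ H)) := by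
      rw [Subgroup.closure_le]
      rintro _ ⟨i, rfl⟩
      show _ ∈ MulAction.stabilizer G _
      have fin : ({((1 : G) : G ⧸ H), x} : Set (G ⧸ H)).Finite := Set.toFinite _
      rw [MulAction.mem_stabilizer_set' fin]
      intro y hy
      fin_cases i
      · exact ha y hy
      · exact hb y hy
      · exact hc y hy
    exact this hg
  have huniv : (Set.univ : Set (G ⧸ H)) ⊆ {((1 : G) : G ⧸ H), x} := by
    intro y _
    induction y using QuotientGroup.induction_on with
    | H g =>
    rw [← key g]
    refine ⟨((1 : G) : G ⧸ H), Or.inl rfl, ?_⟩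
    show ((g * 1 : G) : G ⧸ H) = g
    rw [mul_one]
  have h1 := Set.ncard_le_ncard huniv (Set.toFinite _)
  have h2 := Set.ncard_insert_le ((1 : G) : G ⧸ H) {x}
  rw [Set.ncard_singleton] at h2
  rw [Set.ncard_univ] at h1
  change 3 ≤ Nat.card (G ⧸ H) at h3
  omega

/-- `c` swaps two cosets and `b` moves the second. -/
theorem aux_invol (ha : a ∈ H) (hb : b ∈ H) (hc : c ∉ H) (hcc : c * c ∈ H)
    (hm : c⁻¹ * b * c ∉ H) : AuxR H a b c := by
  have h1 : c * b * c ∉ H := by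
    intro h
    apply hm
    have : c⁻¹ * b * c = (c * c)⁻¹ * (c * b * c) := by group
    rw [this]; exact mul_mem (inv_mem hcc) h
  refine AuxR.mulL (AuxR.mulR (AuxR.refl (AuxSep.of_mem ha h1) (AuxSep.of_mem ha hc) ?_))
  refine AuxSep.symm ⟨fun h => hc ?_, fun h => hc ?_⟩
  · have : c⁻¹ * (c * b * c) = b * c := by group
    rw [this] at h
    exact (Subgroup.mul_mem_cancel_left _ hb).1 h
  · have : c * (c * b * c)⁻¹ = (c * b)⁻¹ := by group
    rw [this] at h
    exact (Subgroup.mul_mem_cancel_right _ hb).1 ((Subgroup.inv_mem_iff _).1 h)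

theorem aux_cbc (ha : a ∈ H) (hb : b ∈ H) (hc : c ∉ H)
    (h1 : c * b * c ∉ H) : AuxR H a b c := by
  refine AuxR.mulL (AuxR.mulR (AuxR.refl (AuxSep.of_mem ha h1) (AuxSep.of_mem ha hc) ?_))
  refine AuxSep.symm ⟨fun h => hc ?_, fun h => hc ?_⟩
  · have : c⁻¹ * (c * b * c) = b * c := by group
    rw [this] at h
    exact (Subgroup.mul_mem_cancel_left _ hb).1 h
  · have : c * (c * b * c)⁻¹ = (c * b)⁻¹ := by group
    rw [this] at h
    exact (Subgroup.mul_mem_cancel_right _ hb).1 ((Subgroup.inv_mem_iff _).1 h)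

theorem aux_two (hfin : H.index ≠ 0) (h3 : 3 ≤ H.index)
    (ha : a ∈ H) (hb : b ∈ H) (hc : c ∉ H) : AuxR H a b c := by
  by_cases hcc : c * c ∈ H
  · by_cases hmb : c⁻¹ * b * c ∈ H
    · by_cases hma : c⁻¹ * a * c ∈ H
      · intro hS
        exfalso
        have sm : ∀ u v : G, u • (v : G ⧸ H) = ((u * v : G) : G ⧸ H) := fun u v => rfl
        refine aux_index hfin hS h3 (c : G ⧸ H) ?_ ?_ ?_
        · rintro y (rfl | rfl)
          · left; rw [sm, QuotientGroup.eq]; simpa using ha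
          · right; rw [sm, eq_comm, QuotientGroup.eq]; simpa [mul_assoc] using hma
        · rintro y (rfl | rfl)
          · left; rw [sm, QuotientGroup.eq]; simpa using hb
          · right; rw [sm, eq_comm, QuotientGroup.eq]; simpa [mul_assoc] using hmb
        · rintro y (rfl | rfl)
          · right; rw [sm, mul_one]
          · left; rw [sm, eq_comm, QuotientGroup.eq]; simpa using hcc
      · exact (aux_invol hb ha hc hcc hma).swap12
    · exact aux_invol ha hb hc hcc hmb
  by_cases h1 : c * b * c ∈ H
  swap
  · exact aux_cbc ha hb hc h1
  by_cases h2 : c * b⁻¹ * c ∈ H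
  swap
  · exact (aux_cbc ha (inv_mem hb) hc h2).inv2
  by_cases h4 : c * a * c ∈ H
  swap
  · exact (aux_cbc hb ha hc h4).swap12
  have hcb : c * b ∉ H := fun h => hc ((Subgroup.mul_mem_cancel_right _ hb).1 h)
  have hac : a * c ∉ H := fun h => hc ((Subgroup.mul_mem_cancel_left _ ha).1 h)
  refine AuxR.mulL (AuxR.swap12 (AuxR.swap23 (AuxR.mulL (AuxR.swap23 (AuxR.swap12 ?_)))))
  refine AuxR.refl (AuxSep.of_mem ha hcb) (AuxSep.of_mem ha hac) ⟨fun h => hcc ?_, fun h => hcc ?_⟩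
  · have : c * c = (c * a * c) * ((b * ((c * b)⁻¹ * (a * c))))⁻¹ := by group
    rw [this]
    exact mul_mem h4 (inv_mem (mul_mem hb h))
  · have : c * c = ((c * b * (a * c)⁻¹) * a)⁻¹ * (c * b * c) := by group
    rw [this]
    exact mul_mem (inv_mem (mul_mem h ha)) h1

theorem aux_one (hfin : H.index ≠ 0) (h3 : 3 ≤ H.index)
    (ha : a ∈ H) (hb : b ∉ H) (hc : c ∉ H) : AuxR H a b c := by
  by_cases h1 : c⁻¹ * b ∈ H
  · exact AuxR.invL (aux_two hfin h3 ha h1 hc)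
  by_cases h2 : b * c⁻¹ ∈ H
  · exact AuxR.invR (aux_two hfin h3 ha h2 hc)
  refine AuxR.refl (AuxSep.of_mem ha hb) (AuxSep.of_mem ha hc) ⟨fun h => h1 ?_, h2⟩
  simpa using inv_mem h

theorem aux_zero (hfin : H.index ≠ 0) (h3 : 3 ≤ H.index)
    (ha : a ∉ H) (hc : c ∉ H) (hbc : ¬ AuxSep H b c) : AuxR H a b c := by
  by_cases h1 : c⁻¹ * b ∈ H
  · exact AuxR.invL (AuxR.swap12 (aux_one hfin h3 h1 ha hc))
  by_cases h2 : b * c⁻¹ ∈ H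
  · exact AuxR.invR (AuxR.swap12 (aux_one hfin h3 h2 ha hc))
  exact (hbc ⟨fun h => h1 (by simpa using inv_mem h), h2⟩).elim

theorem aux_all (hfin : H.index ≠ 0) (h3 : 3 ≤ H.index) (a b c : G) : AuxR H a b c := by
  by_cases ha : a ∈ H <;> by_cases hb : b ∈ H <;> by_cases hc : c ∈ H
  · intro hS
    exfalso
    have : Subgroup.closure (Set.range ![a, b, c]) ≤ H := by
      rw [Subgroup.closure_le]
      rintro _ ⟨i, rfl⟩
      fin_cases i
      · exact ha
      · exact hb
      · exact hc
    rw [hS, top_le_iff] at this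
    rw [this, Subgroup.index_top] at h3
    omega
  · exact aux_two hfin h3 ha hb hc
  · exact (aux_two hfin h3 ha hc hb).swap23
  · exact aux_one hfin h3 ha hb hc
  · exact ((aux_two hfin h3 hb hc ha).swap23).swap12
  · exact (aux_one hfin h3 hb ha hc).swap12
  · exact ((aux_one hfin h3 hc ha hb).swap12).swap23
  · by_cases hbc : AuxSep H b c
    · by_cases hac : AuxSep H a c
      · by_cases hab : AuxSep H a b
        · exact AuxR.refl hab hac hbc
        · exact ((aux_zero hfin h3 hc hb hab).swap12).swap23
      · exact (aux_zero hfin h3 hb hc hac).swap12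
    · exact aux_zero hfin h3 ha hc hbc

theorem aux_pair (h2 : 2 ≤ H.index) (a b : G)
    (hS : Subgroup.closure (Set.range ![a, b]) = ⊤) :
    ∃ a' b', NielsenEquiv ![a, b] ![a', b'] ∧ AuxSep H a' b' := by
  by_cases hb : b ∈ H
  · by_cases ha : a ∈ H
    · exfalso
      have : Subgroup.closure (Set.range ![a, b]) ≤ H := by
        rw [Subgroup.closure_le]
        rintro _ ⟨i, rfl⟩
        fin_cases i
        · exact ha
        · exact hb
      rw [hS, top_le_iff] at this
      rw [this, Subgroup.index_top] at h2
      omega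
    · exact ⟨a, b, Relation.ReflTransGen.refl, (AuxSep.of_mem hb ha).symm⟩
  · by_cases h1 : b⁻¹ * a ∈ H
    · refine ⟨b⁻¹ * a, b, Relation.ReflTransGen.single ?_, AuxSep.of_mem h1 hb⟩
      refine Or.inl ⟨0, 1, by decide, Or.inr (Or.inl ?_)⟩
      funext i; fin_cases i <;> rfl
    by_cases h3 : a * b⁻¹ ∈ H
    · refine ⟨a * b⁻¹, b, Relation.ReflTransGen.single ?_, AuxSep.of_mem h3 hb⟩
      refine Or.inl ⟨0, 1, by decide, Or.inr (Or.inr (Or.inr ?_))⟩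
      funext i; fin_cases i <;> rfl
    exact ⟨a, b, Relation.ReflTransGen.refl, fun h => h1 (by simpa using inv_mem h), h3⟩
end

theorem aux_main {G : Type*} [Group G] (H : Subgroup G) (hfin : H.index ≠ 0) {n : ℕ}
    (hn : n ≤ 3) (S : Fin n → G) (hS : Subgroup.closure (Set.range S) = ⊤)
    (hindex : n ≤ H.index) :
    ∃ S' : Fin n → G, NielsenEquiv S S' ∧ ∀ i j, i ≠ j → AuxSep H (S' i) (S' j) := by
  interval_cases n
  · exact ⟨S, Relation.ReflTransGen.refl, fun i => i.elim0⟩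
  · exact ⟨S, Relation.ReflTransGen.refl, fun i j h => (h (Subsingleton.elim _ _)).elim⟩
  · have e : S = ![S 0, S 1] := by funext i; fin_cases i <;> rfl
    rw [e] at hS ⊢
    obtain ⟨a, b, h, hab⟩ := aux_pair hindex _ _ hS
    refine ⟨_, h, fun i j hij => ?_⟩
    fin_cases i <;> fin_cases j
    · exact (hij rfl).elim
    · exact hab
    · exact hab.symm
    · exact (hij rfl).elim
  · have e : S = ![S 0, S 1, S 2] := by funext i; fin_cases i <;> rfl
    rw [e] at hS ⊢
    obtain ⟨a, b, c, h, hab, hac, hbc⟩ := aux_all hfin hindex _ _ _ hS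
    refine ⟨_, h, fun i j hij => ?_⟩
    fin_cases i <;> fin_cases j
    · exact (hij rfl).elim
    · exact hab
    · exact hac
    · exact hab.symm
    · exact (hij rfl).elim
    · exact hbc
    · exact hac.symm
    · exact hbc.symm
    · exact (hij rfl).elim

/-- If `S` is a generating `n`-tuple of `G` with `n ≤ 3` and `H` is a subgroup of finite
index with `n ≤ [G:H]`, then there is a Nielsen-equivalent generating `n`-tuple `S'` and a
left-right transversal `T` for `H` in `G` containing every entry of `S'`. -/
theorem stmt_9 {G : Type*} [Group G] (H : Subgroup G) (hfin : H.index ≠ 0) {n : ℕ}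
    (hn : n ≤ 3) (S : Fin n → G) (hS : Subgroup.closure (Set.range S) = ⊤)
    (hindex : n ≤ H.index) :
    ∃ (S' : Fin n → G) (T : Set G), NielsenEquiv S S' ∧
      Subgroup.closure (Set.range S') = ⊤ ∧ IsLeftTransversal H T ∧
      IsRightTransversal H T ∧ ∀ i, S' i ∈ T := by
  obtain ⟨S', h, hsep⟩ := aux_main H hfin hn S hS hindex
  obtain ⟨T, hl, hr, hT⟩ := aux_transversal H hfin S' hsep
  exact ⟨S', T, h, aux_closure h hS, hl, hr, hT⟩
end

section
/- Let G be a group with d(G) = n, and let H be a subgroup of finite index in G with [G:H] < n + 2^n. Then at least one of the following holds: (1) H contains at least one primitive element of G; (2) H is normal in G and G/H is isomorphic to C_2^m for some m ≤ n. -/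
/-- A primitive element of a group `G` of finite rank: an element belonging to some
generating set of `G` of size exactly `d(G)`. -/
def IsPrimitive (G : Type*) [Group G] [Group.FG G] (g : G) : Prop :=
  ∃ S : Finset G, g ∈ S ∧ S.card = Group.rank G ∧ Subgroup.closure (S : Set G) = ⊤

section Helpers

/-- A finite group of exponent two generated by a finite set is elementary abelian. -/
lemma elem_abelian {Q : Type*} [inst : Group Q] (hc : ∀ a b : Q, a * b = b * a)
    (hsq : ∀ a : Q, a * a = 1) (T : Finset Q) (hT : Subgroup.closure (T : Set Q) = ⊤) :
    ∃ m ≤ T.card, Nonempty (Q ≃* Multiplicative (Fin m → ZMod 2)) := by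
  classical
  letI : CommGroup Q := { inst with mul_comm := hc }
  letI : Module (ZMod 2) (Additive Q) := AddCommGroup.zmodModule (n := 2) (by
    intro x
    rw [two_nsmul]
    exact hsq x)
  let T' : Finset (Additive Q) := T.image Additive.ofMul
  have hspan : Submodule.span (ZMod 2) (T' : Set (Additive Q)) = ⊤ := by
    rw [eq_top_iff]
    rintro x -
    have hx : Additive.toMul x ∈ Subgroup.closure (T : Set Q) := by rw [hT]; trivial
    have key : ∀ q ∈ Subgroup.closure (T : Set Q),
        Additive.ofMul q ∈ Submodule.span (ZMod 2) (T' : Set (Additive Q)) := by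
      intro q hq
      induction hq using Subgroup.closure_induction with
      | mem y hy =>
        exact Submodule.subset_span (Finset.mem_coe.2 (Finset.mem_image_of_mem _ hy))
      | one => exact Submodule.zero_mem _
      | mul a b _ _ ha hb => exact Submodule.add_mem _ ha hb
      | inv a _ ha => exact Submodule.neg_mem _ ha
    exact key _ hx
  haveI : Module.Finite (ZMod 2) (Additive Q) := ⟨⟨T', hspan⟩⟩
  refine ⟨Module.finrank (ZMod 2) (Additive Q), ?_, ?_⟩
  · have h1 := finrank_span_finset_le_card (R := ZMod 2) T'
    rw [Set.finrank, hspan, finrank_top] at h1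
    exact h1.trans Finset.card_image_le
  · let e := (Module.finBasis (ZMod 2) (Additive Q)).equivFun
    exact ⟨{ toFun := fun q => Multiplicative.ofAdd (e (Additive.ofMul q))
             invFun := fun v => Additive.toMul (e.symm (Multiplicative.toAdd v))
             left_inv := fun q => by simp
             right_inv := fun v => by simp
             map_mul' := fun a b => by
              have : e (Additive.ofMul (a * b)) = e (Additive.ofMul a) + e (Additive.ofMul b) :=
                map_add e (Additive.ofMul a) (Additive.ofMul b)
              rw [this]; rfl }⟩

variable {G : Type*} [Group G] [Group.FG G]

lemma card_of_gen {S : Finset G} (hS : S.card ≤ Group.rank G)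
    (hc : Subgroup.closure (S : Set G) = ⊤) : S.card = Group.rank G :=
  le_antisymm hS (Group.rank_le hc)

open Classical in
lemma prim_move {S : Finset G} (hS : S.card = Group.rank G)
    (hc : Subgroup.closure (S : Set G) = ⊤) {s : G} (hs : s ∈ S) {u v : G}
    (hu : u ∈ Subgroup.closure ((S.erase s : Finset G) : Set G))
    (hv : v ∈ Subgroup.closure ((S.erase s : Finset G) : Set G)) :
    IsPrimitive G (u * s * v) := by
  have hcl : Subgroup.closure ((insert (u * s * v) (S.erase s) : Finset G) : Set G) = ⊤ := by
    rw [eq_top_iff, ← hc, Subgroup.closure_le]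
    have hle : Subgroup.closure ((S.erase s : Finset G) : Set G) ≤
        Subgroup.closure ((insert (u * s * v) (S.erase s) : Finset G) : Set G) :=
      Subgroup.closure_mono (Finset.coe_subset.2 (Finset.subset_insert _ _))
    intro t ht
    by_cases h : t = s
    · subst h
      have h1 : u * t * v ∈
          Subgroup.closure ((insert (u * t * v) (S.erase t) : Finset G) : Set G) :=
        Subgroup.subset_closure (Finset.mem_coe.2 (Finset.mem_insert_self _ _))
      have h2 := mul_mem (mul_mem (inv_mem (hle hu)) h1) (inv_mem (hle hv))
      have h3 : u⁻¹ * (u * t * v) * v⁻¹ = t := by group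
      rw [h3] at h2
      exact h2
    · exact hle (Subgroup.subset_closure (Finset.mem_coe.2 (Finset.mem_erase.2 ⟨h, ht⟩)))
  refine ⟨_, Finset.mem_insert_self _ _, card_of_gen ?_ hcl, hcl⟩
  have h1 := Finset.card_insert_le (u * s * v) (S.erase s)
  have h2 := Finset.card_erase_add_one hs
  omega

lemma prim_conj {g : G} (hg : IsPrimitive G g) (c : G) : IsPrimitive G (c * g * c⁻¹) := by
  classical
  obtain ⟨S, hgS, hS, hc⟩ := hg
  have hcl : Subgroup.closure ((S.image (MulAut.conj c) : Finset G) : Set G) = ⊤ := by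
    have := MonoidHom.map_closure (MulAut.conj c).toMonoidHom (S : Set G)
    rw [Finset.coe_image]
    refine Eq.trans this.symm ?_
    rw [hc]
    exact Subgroup.map_top_of_surjective _ (MulAut.conj c).surjective
  exact ⟨_, Finset.mem_image.2 ⟨g, hgS, rfl⟩,
    card_of_gen (Finset.card_image_le.trans hS.le) hcl, hcl⟩

/-- The set of cosets met by the subgroup generated by `T`. -/
def cosetsOf (H : Subgroup G) (T : Set G) : Set (G ⧸ H) :=
  (fun g : G => (g : G ⧸ H)) '' (Subgroup.closure T : Set G)

open Classical in
lemma double_step (H : Subgroup G) [Finite (G ⧸ H)] (hH : ∀ g ∈ H, ¬ IsPrimitive G g)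
    {S : Finset G} (hS : S.card = Group.rank G) (hc : Subgroup.closure (S : Set G) = ⊤)
    {s : G} (hs : s ∈ S) {T : Finset G} (hT : T ⊆ S.erase s) :
    2 * (cosetsOf H (T : Set G)).ncard ≤ (cosetsOf H ((insert s T : Finset G) : Set G)).ncard := by
  have hle : Subgroup.closure (T : Set G) ≤ Subgroup.closure ((S.erase s : Finset G) : Set G) :=
    Subgroup.closure_mono (Finset.coe_subset.2 hT)
  have hle2 : Subgroup.closure (T : Set G) ≤ Subgroup.closure ((insert s T : Finset G) : Set G) :=
    Subgroup.closure_mono (Finset.coe_subset.2 (Finset.subset_insert _ _))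
  have hdisj : Disjoint (cosetsOf H (T : Set G))
      ((fun q : G ⧸ H => s • q) '' cosetsOf H (T : Set G)) := by
    rw [Set.disjoint_left]
    rintro _ ⟨a, ha, rfl⟩ ⟨_, ⟨b, hb, rfl⟩, hab⟩
    have h1 : ((a : G) : G ⧸ H) = ((s * b : G) : G ⧸ H) := hab.symm
    rw [QuotientGroup.eq] at h1
    refine hH _ h1 ?_
    rw [← mul_assoc]
    exact prim_move hS hc hs (hle (inv_mem ha)) (hle hb)
  have hsub : cosetsOf H (T : Set G) ∪ ((fun q : G ⧸ H => s • q) '' cosetsOf H (T : Set G)) ⊆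
      cosetsOf H ((insert s T : Finset G) : Set G) := by
    rintro _ (⟨a, ha, rfl⟩ | ⟨_, ⟨b, hb, rfl⟩, rfl⟩)
    · exact ⟨a, hle2 ha, rfl⟩
    · exact ⟨s * b, mul_mem (Subgroup.subset_closure
        (Finset.mem_coe.2 (Finset.mem_insert_self _ _))) (hle2 hb), rfl⟩
  have h1 := Set.ncard_le_ncard hsub (Set.toFinite _)
  rw [Set.ncard_union_eq hdisj (Set.toFinite _) (Set.toFinite _),
    Set.ncard_image_of_injective _ (MulAction.injective s)] at h1
  omega

open Classical in
lemma double_many (H : Subgroup G) [Finite (G ⧸ H)] (hH : ∀ g ∈ H, ¬ IsPrimitive G g)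
    {S : Finset G} (hS : S.card = Group.rank G) (hc : Subgroup.closure (S : Set G) = ⊤)
    (T R : Finset G) (hT : T ⊆ S) (hR : R ⊆ S) (hTR : Disjoint T R) :
    2 ^ R.card * (cosetsOf H (T : Set G)).ncard ≤ (cosetsOf H ((R ∪ T : Finset G) : Set G)).ncard := by
  induction R using Finset.induction_on with
  | empty => simp
  | insert a R ha ih =>
    rw [Finset.insert_subset_iff] at hR
    rw [Finset.disjoint_insert_right] at hTR
    have h1 := ih hR.2 hTR.2
    have hsub : R ∪ T ⊆ S.erase a := by
      intro t ht
      rw [Finset.mem_union] at ht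
      rw [Finset.mem_erase]
      rcases ht with h | h
      · exact ⟨fun e => ha (e ▸ h), hR.2 h⟩
      · exact ⟨fun e => hTR.1 (e ▸ h), hT h⟩
    have h2 := double_step H hH hS hc hR.1 hsub
    rw [Finset.card_insert_of_notMem ha, Finset.insert_union, pow_succ]
    calc 2 ^ R.card * 2 * (cosetsOf H (T : Set G)).ncard
        = 2 * (2 ^ R.card * (cosetsOf H (T : Set G)).ncard) := by ring
      _ ≤ 2 * _ := Nat.mul_le_mul_left _ h1
      _ ≤ _ := h2

lemma ncard_cosets_le (H : Subgroup G) [Finite (G ⧸ H)] (T : Set G) :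
    (cosetsOf H T).ncard ≤ H.index := by
  rw [Subgroup.index, ← Set.ncard_univ]
  exact Set.ncard_le_ncard (Set.subset_univ _) (Set.toFinite _)

lemma sq_mem (H : Subgroup G) [Finite (G ⧸ H)] (hH : ∀ g ∈ H, ¬ IsPrimitive G g)
    (hidx : H.index < Group.rank G + 2 ^ Group.rank G) {g : G} (hg : IsPrimitive G g) :
    g * g ∈ H := by
  classical
  by_contra hgg
  have hgH : g ∉ H := fun h => hH g h hg
  obtain ⟨S, hgS, hS, hc⟩ := hg
  have h1 := double_many H hH hS hc {g} (S.erase g) (by simpa using hgS)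
    (Finset.erase_subset _ _) (by simp)
  have h2 := h1.trans (ncard_cosets_le H _)
  have hge : g ∈ Subgroup.closure ((({g} : Finset G)) : Set G) :=
    Subgroup.subset_closure (by simp)
  have h3 : 3 ≤ (cosetsOf H ((({g} : Finset G)) : Set G)).ncard := by
    have hsub : ({((1 : G) : G ⧸ H), ((g : G) : G ⧸ H), ((g * g : G) : G ⧸ H)} : Set (G ⧸ H)) ⊆
        cosetsOf H ((({g} : Finset G)) : Set G) := by
      rintro _ (rfl | rfl | rfl)
      · exact ⟨1, one_mem _, rfl⟩
      · exact ⟨g, hge, rfl⟩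
      · exact ⟨g * g, mul_mem hge hge, rfl⟩
    have h4 := Set.ncard_le_ncard hsub (Set.toFinite _)
    rw [Set.ncard_eq_three.2 ⟨_, _, _, ?_, ?_, ?_, rfl⟩] at h4
    · exact h4
    · rw [Ne, QuotientGroup.eq]; simpa using hgH
    · rw [Ne, QuotientGroup.eq]; simpa using hgg
    · rw [Ne, QuotientGroup.eq]; simpa using hgH
  have h5 := Finset.card_erase_add_one hgS
  have h6 : 2 ^ (S.erase g).card * 3 ≤ H.index := (Nat.mul_le_mul_left _ h3).trans h2
  rw [← hS, ← h5, pow_succ] at hidx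
  have h7 : (S.erase g).card < 2 ^ (S.erase g).card := Nat.lt_two_pow_self
  omega

end Helpers

theorem stmt_15 {G : Type*} [Group G] [Group.FG G] (n : ℕ) (hrank : Group.rank G = n)
    (H : Subgroup G) (hfin : H.index ≠ 0) (hidx : H.index < n + 2 ^ n) :
    (∃ g ∈ H, IsPrimitive G g) ∨
      (H.Normal ∧ ∃ m ≤ n, ∃ φ : G →* Multiplicative (Fin m → ZMod 2),
        Function.Surjective φ ∧ φ.ker = H) := by
  classical
  subst hrank
  by_cases hex : ∃ g ∈ H, IsPrimitive G g
  · exact Or.inl hex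
  right
  have hH : ∀ g ∈ H, ¬ IsPrimitive G g := fun g hg hp => hex ⟨g, hg, hp⟩
  haveI : Finite (G ⧸ H) := Nat.finite_of_card_ne_zero hfin
  obtain ⟨S, hS, hc⟩ := Group.rank_spec G
  have hlow : 2 ^ Group.rank G ≤ H.index := by
    have h1 := (double_many H hH hS hc ∅ S (by simp) subset_rfl (by simp)).trans
      (ncard_cosets_le H _)
    have h2 : 1 ≤ (cosetsOf H (((∅ : Finset G)) : Set G)).ncard := by
      exact (Set.ncard_pos (Set.toFinite _)).2 ⟨_, 1, one_mem _, rfl⟩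
    rw [hS] at h1
    nlinarith [Nat.mul_le_mul_left (2 ^ Group.rank G) h2]
  let N : Subgroup G := Subgroup.normalClosure {x | ∃ g, IsPrimitive G g ∧ x = g * g}
  have hNH : N ≤ H := by
    refine (Subgroup.closure_le _).2 ?_
    intro x hx
    obtain ⟨_, ⟨g, hg, rfl⟩, hconj⟩ := Group.mem_conjugatesOfSet_iff.1 hx
    obtain ⟨c, rfl⟩ := isConj_iff.1 hconj
    have := sq_mem H hH hidx (prim_conj hg c)
    have h2 : c * g * c⁻¹ * (c * g * c⁻¹) = c * (g * g) * c⁻¹ := by group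
    rwa [h2] at this
  have hsqN : ∀ g, IsPrimitive G g → ((g : G) : G ⧸ N) * ((g : G) : G ⧸ N) = 1 := by
    intro g hg
    have : g * g ∈ N := Subgroup.subset_normalClosure ⟨g, hg, rfl⟩
    exact (QuotientGroup.eq_one_iff (g * g)).2 this
  have hprim : ∀ s ∈ S, IsPrimitive G s := fun s hs => ⟨S, hs, hS, hc⟩
  let T : Finset (G ⧸ N) := S.image (QuotientGroup.mk' N)
  have hT : Subgroup.closure (T : Set (G ⧸ N)) = ⊤ := by
    have := MonoidHom.map_closure (QuotientGroup.mk' N) (S : Set G)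
    rw [Finset.coe_image]
    refine Eq.trans this.symm ?_
    rw [hc]
    exact Subgroup.map_top_of_surjective _ (QuotientGroup.mk'_surjective N)
  have hTsq : ∀ a ∈ T, a * a = 1 := by
    intro a ha
    obtain ⟨s, hs, rfl⟩ := Finset.mem_image.1 ha
    exact hsqN s (hprim s hs)
  have hTc : ∀ a ∈ T, ∀ b ∈ T, a * b = b * a := by
    intro a ha b hb
    have ha2 := hTsq a ha
    have hb2 := hTsq b hb
    obtain ⟨s, hs, rfl⟩ := Finset.mem_image.1 ha
    obtain ⟨t, ht, rfl⟩ := Finset.mem_image.1 hb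
    by_cases hst : s = t
    · rw [hst]
    have hp : IsPrimitive G (1 * s * t) := prim_move hS hc hs (one_mem _)
      (Subgroup.subset_closure (Finset.mem_coe.2 (Finset.mem_erase.2 ⟨Ne.symm hst, ht⟩)))
    rw [one_mul] at hp
    have h3 : (QuotientGroup.mk' N s * QuotientGroup.mk' N t) *
      (QuotientGroup.mk' N s * QuotientGroup.mk' N t) = 1 := hsqN _ hp
    rw [mul_eq_one_iff_eq_inv] at h3 ha2 hb2
    rw [h3, mul_inv_rev, ← ha2, ← hb2]
  have hcomm : ∀ a b : G ⧸ N, a * b = b * a := by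
    intro a b
    have ha : a ∈ Subgroup.closure (T : Set (G ⧸ N)) := by rw [hT]; trivial
    have hb : b ∈ Subgroup.closure (T : Set (G ⧸ N)) := by rw [hT]; trivial
    have := Subgroup.isMulCommutative_closure (k := (T : Set (G ⧸ N)))
      (fun x hx y hy => hTc x hx y hy)
    exact congrArg Subtype.val (this.is_comm.comm (⟨a, ha⟩ : Subgroup.closure (T : Set (G ⧸ N))) ⟨b, hb⟩)
  have hsq : ∀ a : G ⧸ N, a * a = 1 := by
    intro a
    have ha : a ∈ Subgroup.closure (T : Set (G ⧸ N)) := by rw [hT]; trivial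
    induction ha using Subgroup.closure_induction with
    | mem y hy => exact hTsq y hy
    | one => simp
    | mul x y _ _ hx hy =>
      calc x * y * (x * y) = x * (y * x) * y := by group
        _ = x * (x * y) * y := by rw [hcomm y x]
        _ = (x * x) * (y * y) := by group
        _ = 1 := by rw [hx, hy, one_mul]
    | inv x _ hx => rw [← mul_inv_rev, hx, inv_one]
  obtain ⟨m, hm, ⟨e⟩⟩ := elem_abelian hcomm hsq T hT
  have hmn : m ≤ Group.rank G := hm.trans (Finset.card_image_le.trans hS.le)
  have hNidx : N.index = 2 ^ m := by
    rw [Subgroup.index, Nat.card_congr e.toEquiv, Nat.card_congr Multiplicative.toAdd]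
    simp
  have hHN : H ≤ N := by
    have h1 := Subgroup.relIndex_mul_index hNH
    have h2 : N.index ≤ H.index := by
      rw [hNidx]
      exact (Nat.pow_le_pow_right (by norm_num) hmn).trans hlow
    have h3 : N.index ≠ 0 := by rw [hNidx]; positivity
    rw [← Subgroup.relIndex_eq_one]
    have h4 : N.relIndex H ≠ 0 := by
      intro h; rw [h, zero_mul] at h1; exact h3 h1.symm
    have h5 : 0 < H.index := Nat.pos_of_ne_zero hfin
    by_contra h6
    have h7 : 2 ≤ N.relIndex H := by omega
    nlinarith
  have hEq : N = H := le_antisymm hNH hHN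
  refine ⟨hEq ▸ (inferInstance : N.Normal), m, hmn,
    e.toMonoidHom.comp (QuotientGroup.mk' N), ?_, ?_⟩
  · exact e.surjective.comp (QuotientGroup.mk'_surjective N)
  · rw [← hEq]
    ext x
    rw [MonoidHom.mem_ker]
    simp
end
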